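/- If an idempotent magma M satisfies the identity (x*y)*(u*v) = u * s(y,v) for all x,y,u,v in M, for some binary term s, then M is medial. -/

import Mathlib

/-- Evaluation of a binary term (an element of the free magma on two
generators) in a magma `M` under the assignment `0 ↦ a`, `1 ↦ b`. -/
def evalBin {M : Type*} [Mul M] (t : FreeMagma (Fin 2)) (a b : M) : M :=
  FreeMagma.lift ![a, b] t

/-!
Write `L a` for the left translation by `a`. The identity and idempotence give `L (x * y) = L y`
and `v * s y v = y * v`. Since translation by a product only sees its right factor, comparing the
translations by the two sides of the latter equality yields `L (s y v) = L v`. Hence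
`s y v = s y v * s y v = v * s y v = y * v`, and mediality follows from
`(x * y) * (u * v) = u * s y v = u * (y * v) = (x * u) * (y * v)`.
-/

/-- The generalized entropic property for an arbitrary binary operation `s` in place of the
evaluation of a binary term. -/
def GeneralizedEntropic {M : Type*} [Mul M] (s : M → M → M) : Prop :=
  ∀ x y u v : M, (x * y) * (u * v) = u * s y v

namespace GeneralizedEntropic

variable {M : Type*} [Mul M] {s : M → M → M}

theorem mul_mul_eq_mul (h : GeneralizedEntropic s) (hidem : ∀ x : M, x * x = x) (x y w : M) :
    (x * y) * w = y * w :=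
  calc (x * y) * w = (x * y) * (w * w) := by rw [hidem w]
    _ = w * s y w := h x y w w
    _ = (y * y) * (w * w) := (h y y w w).symm
    _ = y * w := by rw [hidem, hidem]

theorem mul_mul_eq_mul_op (h : GeneralizedEntropic s) (hidem : ∀ x : M, x * x = x) (y u v : M) :
    y * (u * v) = u * s y v := by
  rw [← h y y u v, hidem]

theorem mul_op_eq_mul (h : GeneralizedEntropic s) (hidem : ∀ x : M, x * x = x) (y v : M) :
    v * s y v = y * v := by
  rw [← h.mul_mul_eq_mul_op hidem, hidem]

theorem op_mul_eq_mul (h : GeneralizedEntropic s) (hidem : ∀ x : M, x * x = x) (y v w : M) :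
    s y v * w = v * w :=
  calc s y v * w = (v * s y v) * w := (h.mul_mul_eq_mul hidem _ _ _).symm
    _ = (y * v) * w := by rw [h.mul_op_eq_mul hidem]
    _ = v * w := h.mul_mul_eq_mul hidem _ _ _

theorem op_eq_mul (h : GeneralizedEntropic s) (hidem : ∀ x : M, x * x = x) (y v : M) :
    s y v = y * v :=
  calc s y v = s y v * s y v := (hidem _).symm
    _ = v * s y v := h.op_mul_eq_mul hidem _ _ _
    _ = y * v := h.mul_op_eq_mul hidem _ _

end GeneralizedEntropic

theorem stmt_2_general {M : Type*} [Mul M] (hidem : ∀ x : M, x * x = x) {s : M → M → M}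
    (h : GeneralizedEntropic s) (x y u v : M) :
    (x * y) * (u * v) = (x * u) * (y * v) :=
  calc (x * y) * (u * v) = u * s y v := h x y u v
    _ = u * (y * v) := by rw [h.op_eq_mul hidem]
    _ = (x * u) * (y * v) := (h.mul_mul_eq_mul hidem _ _ _).symm

/-- An idempotent magma satisfying this instance of the generalized entropic
property is medial. -/
theorem stmt_2 {M : Type*} [Mul M] (hidem : ∀ x : M, x * x = x)
    (s : FreeMagma (Fin 2))
    (h : ∀ x y u v : M, (x * y) * (u * v) = u * evalBin s y v) :
    ∀ x y u v : M, (x * y) * (u * v) = (x * u) * (y * v) :=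
  stmt_2_general hidem (s := evalBin s) h
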